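/- Let a, b, c > 0 satisfy λ/(1−λ) = a·c/b. Then for every ω ∈ (0,1): Ψ(ω, λ, a·s, b·s, c) ≤ d^{−2γ} · OPT(a, b, c, s). -/

import Mathlib

/-- `q(x) = exp(x) - x - 1`. -/
noncomputable def q (x : ℝ) : ℝ := Real.exp x - x - 1

/-- `Q(x) = x·(exp(x) − 1)/(exp(x) − x − 1)`. -/
noncomputable def Qf (x : ℝ) : ℝ := x * (Real.exp x - 1) / (Real.exp x - x - 1)

/-- The generating polynomial `p(z) = (1/d)·((1+z)^k + (d−1)·(1 − z/(d−1))^k)`. -/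
noncomputable def pgen (d k : ℕ) (z : ℝ) : ℝ :=
  (1/(d:ℝ)) * ((1+z)^k + ((d:ℝ)-1) * (1 - z/((d:ℝ)-1))^k)

/-- `Ψ(ω,λ,x,y,z)` for the uniquely extendible case. -/
noncomputable def Psi (d k : ℕ) (γ s ω lam x y z : ℝ) : ℝ :=
  (((d:ℝ)-1) * q x / (q s * ω)) ^ ω *
  (q y / (q s * (1-ω))) ^ (1-ω) *
  (lam * s / (x*z)) ^ (lam * ((k:ℝ)*γ)) *
  ((1-lam) * s / y) ^ ((1-lam) * ((k:ℝ)*γ)) *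
  (pgen d k z / (d:ℝ)) ^ γ

/-- `OPT(x,y,z,s)` for domain size `d`, with `Q = Q(s)`. -/
noncomputable def OPTu (d : ℕ) (x y z s : ℝ) : ℝ :=
  (((d:ℝ)-1) * q (s*x) / q s + q (s*y) / q s) *
  (1/(y + x*z)) ^ (Qf s) *
  ((1+z) ^ (Qf s) + ((d:ℝ)-1) * |1 - z/((d:ℝ)-1)| ^ (Qf s))

lemma q_pos_aux {x : ℝ} (hx : 0 < x) : 0 < q x := by
  unfold q
  have := Real.add_one_lt_exp hx.ne'
  linarith

lemma amgm_aux {A B w : ℝ} (hA : 0 ≤ A) (hB : 0 ≤ B) (h0 : 0 < w) (h1 : w < 1) :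
    (A / w) ^ w * (B / (1 - w)) ^ (1 - w) ≤ A + B := by
  have h1' : 0 < 1 - w := by linarith
  have h := Real.geom_mean_le_arith_mean2_weighted h0.le h1'.le
    (div_nonneg hA h0.le) (div_nonneg hB h1'.le) (by ring)
  rwa [mul_div_cancel₀ _ h0.ne', mul_div_cancel₀ _ h1'.ne'] at h

lemma inner_nonneg_aux {m z : ℝ} {k : ℕ} (hk : 1 ≤ k) (hm : 1 ≤ m) (hz : 0 < z) :
    0 ≤ (1 + z) ^ k + m * (1 - z / m) ^ k := by
  have hm0 : 0 < m := by linarith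
  rcases le_total 0 (1 - z / m) with h | h
  · positivity
  · have h2 : |1 - z / m| ≤ (1 + z) / m := by
      rw [abs_of_nonpos h, add_div]
      have : 0 < 1 / m := by positivity
      linarith
    have h3 : |(1 - z / m) ^ k| ≤ (1 + z) ^ k / m ^ k := by
      rw [abs_pow, ← div_pow]
      exact pow_le_pow_left₀ (abs_nonneg _) h2 k
    have h4 : (1 + z) ^ k / m ^ k ≤ (1 + z) ^ k / m := by
      apply div_le_div_of_nonneg_left (by positivity) hm0
      exact le_self_pow₀ hm (by omega)
    have h5 := neg_abs_le ((1 - z / m) ^ k)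
    have h6 : m * -((1 + z) ^ k / m) ≤ m * (1 - z / m) ^ k :=
      mul_le_mul_of_nonneg_left (by linarith) hm0.le
    have h7 : m * -((1 + z) ^ k / m) = -(1 + z) ^ k := by
      field_simp
    linarith

lemma inner_le_aux {m z γ : ℝ} {k : ℕ} (hk : 1 ≤ k) (hm : 1 ≤ m) (hz : 0 < z)
    (h0 : 0 < γ) (h1 : γ < 1) :
    ((1 + z) ^ k + m * (1 - z / m) ^ k) ^ γ
      ≤ (1 + z) ^ ((k : ℝ) * γ) + m * |1 - z / m| ^ ((k : ℝ) * γ) := by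
  have hm0 : 0 < m := by linarith
  have hz1 : 0 ≤ 1 + z := by linarith
  calc ((1 + z) ^ k + m * (1 - z / m) ^ k) ^ γ
      ≤ ((1 + z) ^ k + m * |1 - z / m| ^ k) ^ γ := by
        apply Real.rpow_le_rpow (inner_nonneg_aux hk hm hz) _ h0.le
        have : (1 - z / m) ^ k ≤ |1 - z / m| ^ k := by
          rw [← abs_pow]; exact le_abs_self _
        gcongr
    _ ≤ ((1 + z) ^ k) ^ γ + (m * |1 - z / m| ^ k) ^ γ :=
        Real.rpow_add_le_add_rpow (by positivity) (by positivity) h0.le h1.le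
    _ = (1 + z) ^ ((k : ℝ) * γ) + m ^ γ * |1 - z / m| ^ ((k : ℝ) * γ) := by
        rw [Real.mul_rpow hm0.le (by positivity), Real.rpow_natCast_mul hz1,
          Real.rpow_natCast_mul (abs_nonneg _)]
    _ ≤ _ := by
        have : m ^ γ ≤ m := by
          simpa using Real.rpow_le_rpow_of_exponent_le hm h1.le
        gcongr

theorem stmt15 (k d : ℕ) (hk : 1 ≤ k) (hd : 2 ≤ d) (γ : ℝ)
    (hγ : γ ∈ Set.Ioo (0:ℝ) 1) (hkγ : 2 < (k:ℝ) * γ)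
    (s : ℝ) (hs : 0 < s) (hQs : Qf s = (k:ℝ) * γ)
    (lam a b c : ℝ) (hlam : lam ∈ Set.Ioo (0:ℝ) 1)
    (ha : 0 < a) (hb : 0 < b) (hc : 0 < c)
    (hrel : lam / (1 - lam) = a * c / b) :
    ∀ ω ∈ Set.Ioo (0:ℝ) 1,
      Psi d k γ s ω lam (a*s) (b*s) c ≤ (d:ℝ) ^ (-(2*γ)) * OPTu d a b c s := by
  intro ω hω
  obtain ⟨hω0, hω1⟩ := hω
  obtain ⟨hγ0, hγ1⟩ := hγ
  obtain ⟨hl0, hl1⟩ := hlam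
  have hd' : (2:ℝ) ≤ d := by exact_mod_cast hd
  have hd0 : (0:ℝ) < d := by linarith
  have hm : (1:ℝ) ≤ (d:ℝ) - 1 := by linarith
  have hm0 : (0:ℝ) < (d:ℝ) - 1 := by linarith
  have hl1' : 0 < 1 - lam := by linarith
  have hden : 0 < b + a * c := by positivity
  rw [div_eq_div_iff hl1'.ne' hb.ne'] at hrel
  have e1 : lam * s / (a * s * c) = 1 / (b + a * c) := by
    rw [div_eq_div_iff (by positivity) hden.ne']
    linear_combination s * hrel
  have e2 : (1 - lam) * s / (b * s) = 1 / (b + a * c) := by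
    rw [div_eq_div_iff (by positivity) hden.ne']
    linear_combination (-s) * hrel
  have hqs := q_pos_aux hs
  have hqa := q_pos_aux (mul_pos hs ha)
  have hqb := q_pos_aux (mul_pos hs hb)
  unfold Psi OPTu
  rw [e1, e2, hQs, mul_comm a s, mul_comm b s, ← div_div, ← div_div]
  have h1 := amgm_aux (A := ((d:ℝ)-1) * q (s*a) / q s) (B := q (s*b) / q s)
    (by positivity) (by positivity) hω0 hω1
  have h2 : (1 / (b + a * c)) ^ (lam * ((k:ℝ)*γ)) * (1 / (b + a * c)) ^ ((1-lam) * ((k:ℝ)*γ))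
      = (1 / (b + a * c)) ^ ((k:ℝ)*γ) := by
    rw [← Real.rpow_add (by positivity)]
    congr 1; ring
  have h3 : (pgen d k c / (d:ℝ)) ^ γ = (d:ℝ) ^ (-(2*γ)) *
      ((1 + c) ^ k + ((d:ℝ)-1) * (1 - c / ((d:ℝ)-1)) ^ k) ^ γ := by
    have : pgen d k c / (d:ℝ) = ((d:ℝ) ^ (-2:ℝ)) *
        ((1 + c) ^ k + ((d:ℝ)-1) * (1 - c / ((d:ℝ)-1)) ^ k) := by
      unfold pgen
      rw [Real.rpow_neg hd0.le, Real.rpow_two]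
      field_simp
    rw [this, Real.mul_rpow (by positivity) (inner_nonneg_aux hk hm hc), ← Real.rpow_mul hd0.le]
    congr 2; ring
  have h4 := inner_le_aux (k := k) hk hm hc hγ0 hγ1
  have hn := Real.rpow_nonneg (inner_nonneg_aux hk hm hc) γ
  rw [h3, mul_assoc (_ * _) (_ ^ (lam * _)), h2]
  rw [mul_left_comm]
  gcongr
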